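/- arXiv:2303.11777 — 3 statements merged into one kernel-verified Lean document; each statement's English description precedes it below -/
import Mathlib

section
/- Let N, T ≥ 1 and let Θ be an (NT)×(NT) real matrix with entries indexed by pairs (i,t), i ∈ Fin N, t ∈ Fin T. Suppose |Θ_{(i,t),(j,s)}| ≤ ρ^{|t−s|}·M_{ij} for all i,j,t,s, where 0 ≤ ρ < 1 and the nonnegative M_{ij} satisfy M_{ii} ≤ M_ξ and ∑_{j≠i} M_{ij} ≤ M_ξ for all i. Let D be the diagonal matrix with D_{(i,t),(i,t)} = Θ_{(i,t),(i,t)}. Then (1/(NT))·‖Θ − D‖_F ≤ 2M_ξ(1+ρ)/((1−ρ)·√(NT)), where ‖·‖_F is the Frobenius norm. -/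
open Matrix

/-!
The Frobenius norm of a matrix with `m` rows is at most `√m` times its largest absolute row sum,
because the `ℓ²` norm of each row is at most its `ℓ¹` norm. The decay `ρ ^ |t - s| * M i j` makes
each absolute row sum of `Θ` at most a row sum of `M` times the two-sided geometric series
`∑ ρ ^ |k| = (1 + ρ) / (1 - ρ)`, and deleting the diagonal only decreases these sums.
-/

section GeometricSums

variable {ι : Type*} {ρ : ℝ}

theorem sum_pow_le_of_injOn (hρ0 : 0 ≤ ρ) (hρ1 : ρ < 1) {S : Finset ι} {f : ι → ℕ}
    (hf : Set.InjOn f S) : ∑ i ∈ S, ρ ^ f i ≤ 1 / (1 - ρ) := by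
  rw [← Finset.sum_image (f := fun n => ρ ^ n) hf, one_div]
  exact sum_le_hasSum _ (fun n _ => pow_nonneg hρ0 n) (hasSum_geometric_of_lt_one hρ0 hρ1)

theorem sum_pow_dist_le (hρ0 : 0 ≤ ρ) (hρ1 : ρ < 1) (S : Finset ℕ) (t : ℕ) :
    ∑ s ∈ S, ρ ^ Nat.dist t s ≤ (1 + ρ) / (1 - ρ) := by
  have past : ∑ s ∈ S with s ≤ t, ρ ^ Nat.dist t s ≤ 1 / (1 - ρ) := by
    refine sum_pow_le_of_injOn hρ0 hρ1 fun a ha b hb hab => ?_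
    simp only [Finset.coe_filter, Set.mem_ofPred_eq, Nat.dist] at ha hb hab
    lia
  have future : ∑ s ∈ S with ¬s ≤ t, ρ ^ Nat.dist t s ≤ ρ * (1 / (1 - ρ)) := by
    calc ∑ s ∈ S with ¬s ≤ t, ρ ^ Nat.dist t s
        = ρ * ∑ s ∈ S with ¬s ≤ t, ρ ^ (s - t - 1) := by
          rw [Finset.mul_sum]
          refine Finset.sum_congr rfl fun s hs => ?_
          rw [← pow_succ', Nat.dist]
          have := (Finset.mem_filter.mp hs).2
          congr 1
          lia
      _ ≤ ρ * (1 / (1 - ρ)) := by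
          refine mul_le_mul_of_nonneg_left (sum_pow_le_of_injOn hρ0 hρ1 fun a ha b hb hab => ?_) hρ0
          simp only [Finset.coe_filter, Set.mem_ofPred_eq] at ha hb hab
          lia
  calc ∑ s ∈ S, ρ ^ Nat.dist t s
      = ∑ s ∈ S with s ≤ t, ρ ^ Nat.dist t s + ∑ s ∈ S with ¬s ≤ t, ρ ^ Nat.dist t s :=
        (Finset.sum_filter_add_sum_filter_not S (· ≤ t) _).symm
    _ ≤ 1 / (1 - ρ) + ρ * (1 / (1 - ρ)) := add_le_add past future
    _ = (1 + ρ) / (1 - ρ) := by ring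

end GeometricSums

section RowSums

variable {κ τ α : Type*} [Fintype κ] [Fintype τ] [SeminormedAddCommGroup α]

theorem sum_norm_le_of_geometric_decay {ρ : ℝ} (hρ0 : 0 ≤ ρ) (hρ1 : ρ < 1) {time : τ → ℕ}
    (htime : Function.Injective time) (t : τ) {a : κ × τ → α} {M : κ → ℝ}
    (ha : ∀ j s, ‖a (j, s)‖ ≤ ρ ^ Nat.dist (time t) (time s) * M j) :
    ∑ q, ‖a q‖ ≤ (∑ j, M j) * ((1 + ρ) / (1 - ρ)) := by
  have hM : ∀ j, 0 ≤ M j := fun j =>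
    (norm_nonneg _).trans (by simpa only [Nat.dist_self, pow_zero, one_mul] using ha j t)
  have hgeom : ∑ s, ρ ^ Nat.dist (time t) (time s) ≤ (1 + ρ) / (1 - ρ) := by
    simpa only [Finset.sum_map, Function.Embedding.coeFn_mk] using
      sum_pow_dist_le hρ0 hρ1 (Finset.univ.map ⟨time, htime⟩) (time t)
  calc ∑ q, ‖a q‖
      ≤ ∑ q : κ × τ, M q.1 * ρ ^ Nat.dist (time t) (time q.2) :=
        Finset.sum_le_sum fun q _ => (ha q.1 q.2).trans_eq (mul_comm _ _)
    _ = (∑ j, M j) * ∑ s, ρ ^ Nat.dist (time t) (time s) := by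
        rw [Finset.sum_mul_sum, Fintype.sum_prod_type]
    _ ≤ (∑ j, M j) * ((1 + ρ) / (1 - ρ)) :=
        mul_le_mul_of_nonneg_left hgeom (Finset.sum_nonneg fun j _ => hM j)

end RowSums

theorem norm_sub_diagonal_diag_apply_le {n α : Type*} [DecidableEq n]
    [SeminormedAddCommGroup α] (A : Matrix n n α) (i j : n) :
    ‖(A - diagonal A.diag) i j‖ ≤ ‖A i j‖ := by
  rcases eq_or_ne i j with rfl | hij
  · simp
  · simp [diagonal_apply_ne _ hij]

section Frobenius

open scoped Matrix.Norms.Frobenius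

variable {m n α : Type*} [Fintype m] [Fintype n] [SeminormedAddCommGroup α]

theorem frobenius_norm_eq_sqrt_sum_sq (A : Matrix m n α) :
    ‖A‖ = √(∑ i, ∑ j, ‖A i j‖ ^ 2) := by
  simp only [frobenius_norm_def, Real.rpow_two, Real.sqrt_eq_rpow]

theorem frobenius_norm_le_sqrt_card_mul_of_row_sum_le {A : Matrix m n α} {B : ℝ}
    (hrow : ∀ i, ∑ j, ‖A i j‖ ≤ B) : ‖A‖ ≤ √(Fintype.card m) * B := by
  rcases isEmpty_or_nonempty m with _ | ⟨⟨i₀⟩⟩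
  · simp [frobenius_norm_eq_sqrt_sum_sq]
  have hB : 0 ≤ B := (Finset.sum_nonneg fun j _ => norm_nonneg (A i₀ j)).trans (hrow i₀)
  have hrow_sq : ∀ i, ∑ j, ‖A i j‖ ^ 2 ≤ B ^ 2 := fun i =>
    calc ∑ j, ‖A i j‖ ^ 2
        ≤ (∑ j, ‖A i j‖) ^ 2 := Finset.sum_sq_le_sq_sum_of_nonneg fun j _ => norm_nonneg (A i j)
      _ ≤ B ^ 2 := pow_le_pow_left₀ (Finset.sum_nonneg fun j _ => norm_nonneg (A i j)) (hrow i) 2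
  calc ‖A‖
      = √(∑ i, ∑ j, ‖A i j‖ ^ 2) := frobenius_norm_eq_sqrt_sum_sq A
    _ ≤ √(∑ _i : m, B ^ 2) := Real.sqrt_le_sqrt (Finset.sum_le_sum fun i _ => hrow_sq i)
    _ = √(Fintype.card m) * B := by
        rw [Finset.sum_const, Finset.card_univ, nsmul_eq_mul, Real.sqrt_mul (Nat.cast_nonneg _),
          Real.sqrt_sq hB]

theorem frobenius_norm_sub_diagonal_diag_le_of_geometric_decay {ι τ : Type*} [Fintype ι] [Fintype τ]
    [DecidableEq ι] [DecidableEq τ] {time : τ → ℕ} (htime : Function.Injective time)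
    {ρ C : ℝ} (hρ0 : 0 ≤ ρ) (hρ1 : ρ < 1) {Θ : Matrix (ι × τ) (ι × τ) α} {M : ι → ι → ℝ}
    (hΘ : ∀ i j t s, ‖Θ (i, t) (j, s)‖ ≤ ρ ^ Nat.dist (time t) (time s) * M i j)
    (hM : ∀ i, ∑ j, M i j ≤ C) :
    ‖Θ - diagonal Θ.diag‖ ≤
      √((Fintype.card ι : ℝ) * Fintype.card τ) * (C * ((1 + ρ) / (1 - ρ))) := by
  rw [← Nat.cast_mul, ← Fintype.card_prod]
  refine frobenius_norm_le_sqrt_card_mul_of_row_sum_le fun (i, t) => ?_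
  calc ∑ q, ‖(Θ - diagonal Θ.diag) (i, t) q‖
      ≤ ∑ q, ‖Θ (i, t) q‖ :=
        Finset.sum_le_sum fun q _ => norm_sub_diagonal_diag_apply_le Θ (i, t) q
    _ ≤ (∑ j, M i j) * ((1 + ρ) / (1 - ρ)) :=
        sum_norm_le_of_geometric_decay hρ0 hρ1 htime t fun j s => hΘ i j t s
    _ ≤ C * ((1 + ρ) / (1 - ρ)) :=
        mul_le_mul_of_nonneg_right (hM i)
          (div_nonneg (add_nonneg zero_le_one hρ0) (sub_nonneg.mpr hρ1.le))

theorem stmt4_general {ι τ : Type*} [Fintype ι] [Fintype τ] [Nonempty ι] [Nonempty τ]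
    [DecidableEq ι] [DecidableEq τ] {time : τ → ℕ} (htime : Function.Injective time)
    (Θ : Matrix (ι × τ) (ι × τ) α) {ρ Mξ : ℝ} {M : ι → ι → ℝ} (hρ0 : 0 ≤ ρ) (hρ1 : ρ < 1)
    (hΘ : ∀ i j t s, ‖Θ (i, t) (j, s)‖ ≤ ρ ^ Nat.dist (time t) (time s) * M i j)
    (hdiag : ∀ i, M i i ≤ Mξ) (hrow : ∀ i, ∑ j ∈ Finset.univ.erase i, M i j ≤ Mξ) :
    1 / ((Fintype.card ι : ℝ) * Fintype.card τ) * ‖Θ - diagonal Θ.diag‖ ≤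
      2 * Mξ * (1 + ρ) / ((1 - ρ) * √((Fintype.card ι : ℝ) * Fintype.card τ)) := by
  have hM : ∀ i, ∑ j, M i j ≤ 2 * Mξ := fun i => by
    rw [← Finset.add_sum_erase _ _ (Finset.mem_univ i), two_mul]
    exact add_le_add (hdiag i) (hrow i)
  have hnorm := frobenius_norm_sub_diagonal_diag_le_of_geometric_decay htime hρ0 hρ1 hΘ hM
  have hc : 0 < (Fintype.card ι : ℝ) * Fintype.card τ := by positivity
  generalize (Fintype.card ι : ℝ) * Fintype.card τ = c at hnorm hc ⊢
  rw [one_div_mul_eq_div, div_le_iff₀ hc]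
  calc ‖Θ - diagonal Θ.diag‖
      ≤ √c * (2 * Mξ * ((1 + ρ) / (1 - ρ))) := hnorm
    _ = 2 * Mξ * (1 + ρ) / (1 - ρ) * (c / √c) := by rw [Real.div_sqrt]; ring
    _ = 2 * Mξ * (1 + ρ) / ((1 - ρ) * √c) * c := by rw [div_mul_div_comm, mul_div_right_comm]

end Frobenius

/-- Equation (36): the average Frobenius distance between the full idiosyncratic
covariance `Θ` (entries bounded by `ρ^{|t−s|} M_{ij}`) and its diagonal `D` is at most
`2Mξ(1+ρ)/((1−ρ)√(NT))`. -/
theorem stmt4 {N T : ℕ} (hN : 1 ≤ N) (hT : 1 ≤ T)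
    (Θ : Matrix (Fin N × Fin T) (Fin N × Fin T) ℝ)
    (ρ Mξ : ℝ) (Mm : Fin N → Fin N → ℝ)
    (hρ0 : 0 ≤ ρ) (hρ1 : ρ < 1) (hMξ : 0 < Mξ)
    (hMnn : ∀ i j, 0 ≤ Mm i j)
    (hΘ : ∀ (i j : Fin N) (t s : Fin T),
      |Θ (i, t) (j, s)| ≤ ρ ^ (Nat.dist (t : ℕ) (s : ℕ)) * Mm i j)
    (hdiag : ∀ i, Mm i i ≤ Mξ)
    (hrow : ∀ i, ∑ j ∈ Finset.univ.erase i, Mm i j ≤ Mξ)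
    (D : Matrix (Fin N × Fin T) (Fin N × Fin T) ℝ)
    (hD : D = Matrix.diagonal (fun p => Θ p p)) :
    (1 / ((N : ℝ) * T)) * Real.sqrt (∑ p, ∑ q, (Θ p q - D p q) ^ 2) ≤
      2 * Mξ * (1 + ρ) / ((1 - ρ) * Real.sqrt ((N : ℝ) * T)) := by
  have : Nonempty (Fin N) := Fin.pos_iff_nonempty.mp hN
  have : Nonempty (Fin T) := Fin.pos_iff_nonempty.mp hT
  obtain rfl : D = diagonal Θ.diag := hD
  simpa only [frobenius_norm_eq_sqrt_sum_sq, Fintype.card_fin, Real.norm_eq_abs, sq_abs,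
    Matrix.sub_apply] using
      stmt4_general Fin.val_injective Θ hρ0 hρ1 hΘ hdiag hrow
end

section
/- Let L be a real N×r matrix of rank r, let V be a real N×r matrix with V′V = I_r whose column space equals the column space of L, let M be an r×r diagonal matrix with strictly positive diagonal entries, and let S be an r×r diagonal matrix whose diagonal entries are each +1 or −1. Define R := (L′VV′L)⁻¹L′V S M^{1/2}, where M^{1/2} is the diagonal matrix of positive square roots of the entries of M. Then R is invertible, L·R = V S M^{1/2}, and R⁻¹ = M^{−1/2} S V′ L. -/
open Matrix

/-! Both ranges agree, so `V = L C` for a square `C`, and `V′V = I` turns this into `(V′L) C = I`.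
Hence `B = V′L` is invertible with `L B⁻¹ = V`. Since `L′V = B′`, the matrix `R` is
`(B′B)⁻¹ B′ S M^{1/2} = B⁻¹ S M^{1/2}`, and all three claims can be read off this formula. -/

section Range

theorem exists_eq_mul_of_range_mulVecLin_le {α m n k : Type*} [CommSemiring α] [Fintype n]
    [Fintype k] {A : Matrix m n α} {B : Matrix m k α}
    (h : LinearMap.range A.mulVecLin ≤ LinearMap.range B.mulVecLin) :
    ∃ C : Matrix k n α, A = B * C := by
  have col_mem (j : n) : A.col j ∈ LinearMap.range B.mulVecLin :=
    h (A.range_mulVecLin ▸ Submodule.subset_span (Set.mem_range_self j))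
  choose c hc using col_mem
  exact ⟨(Matrix.of c)ᵀ, Matrix.ext fun i j => (congrFun (hc j) i).symm⟩

variable {α m n : Type*} [CommRing α] [Fintype m] [Fintype n] [DecidableEq n]
  {L V : Matrix m n α} {W : Matrix n m α}

theorem mul_inv_mul_eq_of_range_mulVecLin_le (hWV : W * V = 1)
    (h : LinearMap.range V.mulVecLin ≤ LinearMap.range L.mulVecLin) :
    L * (W * L)⁻¹ = V := by
  obtain ⟨C, hVLC⟩ := exists_eq_mul_of_range_mulVecLin_le h
  have hWLC : W * L * C = 1 := by rw [Matrix.mul_assoc, ← hVLC, hWV]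
  rw [Matrix.inv_eq_right_inv hWLC, ← hVLC]

theorem isUnit_mul_of_range_mulVecLin_le (hWV : W * V = 1)
    (h : LinearMap.range V.mulVecLin ≤ LinearMap.range L.mulVecLin) :
    IsUnit (W * L) :=
  .of_mul_eq_one (W * L)⁻¹ <| by
    rw [Matrix.mul_assoc, mul_inv_mul_eq_of_range_mulVecLin_le hWV h, hWV]

end Range

section Square

variable {n : Type*} [Fintype n] [DecidableEq n]

theorem inv_transpose_mul_self_mul_transpose {α : Type*} [CommRing α] {B : Matrix n n α}
    (hB : IsUnit B) : (Bᵀ * B)⁻¹ * Bᵀ = B⁻¹ := by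
  have hBt : IsUnit Bᵀ.det :=
    Matrix.isUnit_det_transpose B ((Matrix.isUnit_iff_isUnit_det B).mp hB)
  rw [Matrix.mul_inv_rev, Matrix.nonsing_inv_mul_cancel_right _ _ hBt]

theorem diagonal_sign_mul_diagonal_mul_inv {K : Type*} [DivisionRing K] {s t : n → K}
    (hs : ∀ j, s j = 1 ∨ s j = -1) (ht : ∀ j, t j ≠ 0) :
    diagonal s * diagonal t * (diagonal (fun j => (t j)⁻¹) * diagonal s) = 1 := by
  have entry (j : n) : s j * t j * ((t j)⁻¹ * s j) = 1 := by
    rw [mul_assoc, mul_inv_cancel_left₀ (ht j), mul_self_eq_one_iff.mpr (hs j)]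
  simp only [diagonal_mul_diagonal, entry, diagonal_one]

end Square

theorem stmt6_general {α m n : Type*} [CommRing α] [Fintype m] [Fintype n] [DecidableEq n]
    {L V : Matrix m n α} {D R : Matrix n n α} (hV : Vᵀ * V = 1)
    (hspan : LinearMap.range V.mulVecLin ≤ LinearMap.range L.mulVecLin) (hD : IsUnit D)
    (hR : R = (Lᵀ * V * Vᵀ * L)⁻¹ * Lᵀ * V * D) :
    IsUnit R ∧ L * R = V * D ∧ R⁻¹ = D⁻¹ * Vᵀ * L := by
  have hB : IsUnit (Vᵀ * L) := isUnit_mul_of_range_mulVecLin_le hV hspan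
  have hLV : Lᵀ * V = (Vᵀ * L)ᵀ := by rw [transpose_mul, transpose_transpose]
  have hRB : R = (Vᵀ * L)⁻¹ * D := by
    rw [hR, Matrix.mul_assoc _ Lᵀ V, Matrix.mul_assoc _ Vᵀ L, hLV,
      inv_transpose_mul_self_mul_transpose hB]
  refine ⟨?_, ?_, ?_⟩
  · rw [hRB]
    exact (Matrix.isUnit_nonsing_inv_iff.mpr hB).mul hD
  · rw [hRB, ← Matrix.mul_assoc, mul_inv_mul_eq_of_range_mulVecLin_le hV hspan]
  · rw [hRB, Matrix.mul_inv_rev, Matrix.nonsing_inv_nonsing_inv _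
      ((Matrix.isUnit_iff_isUnit_det _).mp hB), ← Matrix.mul_assoc]

/-- Appendix C identification: with `L` of rank `r`, `V` orthonormal spanning the same
column space, `M = diag d` with `d > 0`, `S = diag s` with `s_j = ±1`, the matrix
`R = (L′VV′L)⁻¹ L′V S M^{1/2}` is invertible, `L R = V S M^{1/2}` and
`R⁻¹ = M^{−1/2} S V′ L`. -/
theorem stmt6 {N r : ℕ} (L V : Matrix (Fin N) (Fin r) ℝ)
    (hLrank : L.rank = r)
    (hV : Vᵀ * V = 1)
    (hspan : LinearMap.range L.mulVecLin = LinearMap.range V.mulVecLin)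
    (d s : Fin r → ℝ) (hd : ∀ j, 0 < d j) (hs : ∀ j, s j = 1 ∨ s j = -1)
    (R : Matrix (Fin r) (Fin r) ℝ)
    (hR : R = (Lᵀ * V * Vᵀ * L)⁻¹ * Lᵀ * V * Matrix.diagonal s *
        Matrix.diagonal (fun j => Real.sqrt (d j))) :
    IsUnit R ∧
      L * R = V * Matrix.diagonal s * Matrix.diagonal (fun j => Real.sqrt (d j)) ∧
      R⁻¹ = Matrix.diagonal (fun j => (Real.sqrt (d j))⁻¹) * Matrix.diagonal s * Vᵀ * L := by
  have hD := diagonal_sign_mul_diagonal_mul_inv hs fun j => (Real.sqrt_pos.mpr (hd j)).ne'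
  simpa only [Matrix.inv_eq_right_inv hD, Matrix.mul_assoc] using
    stmt6_general hV hspan.ge (.of_mul_eq_one _ hD) (by rw [hR, Matrix.mul_assoc])
end

section
/- Let Λ be a real N×r matrix with rows λ_j′ satisfying ‖λ_j‖ ≤ M_Λ for all j, let Σ = diag(σ_1²,…,σ_N²) with σ_j² ≥ C > 0 for all j, let Γ be a real N×N matrix with ∑_{j=1}^N |Γ_{ji}| ≤ M_ξ for a fixed index i, and suppose the smallest eigenvalue of N⁻¹Λ′Σ⁻¹Λ is at least c > 0 (in particular Λ′Σ⁻¹Λ is invertible). Then the vector D_i := σ_i⁻²·(N⁻¹Λ′Σ⁻¹Λ)⁻¹·(N⁻¹ ∑_{j=1}^N λ_j Γ_{ji}/σ_j²) satisfies ‖D_i‖ ≤ M_Λ·M_ξ/(c·C²·N). Moreover D_i = σ_i⁻²·(Λ′Σ⁻¹Λ)⁻¹ Λ′ Σ⁻¹ Γ e_i, where e_i is the i-th standard basis vector of ℝ^N. -/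
/-!
The `c`-lower bound on the spectrum of the symmetric matrix `G = N⁻¹Λ′Σ⁻¹Λ` says, by Parseval in an
eigenbasis, that `c ‖x‖ ≤ ‖G x‖`, hence `‖G⁻¹ b‖ ≤ ‖b‖ / c`. Here `b` is `N⁻¹` times a combination
of the rows `λ_j` whose coefficients `Γ_{ji}/σ_j²` have total mass at most `M_ξ / C`; the factor
`σ_i⁻²` contributes the second `C⁻¹`. In the closed form the two factors `N⁻¹` cancel.
-/

open Matrix

/-- Euclidean norm of a vector in `ℝ^r`. -/
noncomputable def enorm {r : ℕ} (v : Fin r → ℝ) : ℝ := Real.sqrt (∑ k, v k ^ 2)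

section Diagonalizable

variable {ι 𝕜 E : Type*} [Fintype ι] [RCLike 𝕜] [NormedAddCommGroup E] [InnerProductSpace 𝕜 E]

lemma inner_map_of_apply_eq_smul (b : OrthonormalBasis ι 𝕜 E) {T : E →ₗ[𝕜] E} {μ : ι → 𝕜}
    (hT : ∀ k, T (b k) = μ k • b k) (x : E) (k : ι) :
    inner 𝕜 (b k) (T x) = μ k * inner 𝕜 (b k) x := by
  classical
  have hTx : T x = ∑ j, (inner 𝕜 (b j) x * μ j) • b j := by
    conv_lhs => rw [← b.sum_repr' x]
    simp only [map_sum, map_smul, hT, smul_smul]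
  rw [hTx, b.orthonormal.inner_right_fintype, mul_comm]

lemma mul_norm_le_norm_map_of_apply_eq_smul (b : OrthonormalBasis ι 𝕜 E) {T : E →ₗ[𝕜] E}
    {μ : ι → 𝕜} (hT : ∀ k, T (b k) = μ k • b k) {c : ℝ} (hc : 0 ≤ c) (hμ : ∀ k, c ≤ ‖μ k‖)
    (x : E) : c * ‖x‖ ≤ ‖T x‖ := by
  refine le_of_sq_le_sq ?_ (norm_nonneg _)
  calc (c * ‖x‖) ^ 2 = ∑ k, (c * ‖inner 𝕜 (b k) x‖) ^ 2 := by
        simp only [mul_pow, ← Finset.mul_sum, b.sum_sq_norm_inner_right]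
    _ ≤ ∑ k, (‖μ k‖ * ‖inner 𝕜 (b k) x‖) ^ 2 := by
        gcongr with k
        exact hμ k
    _ = ‖T x‖ ^ 2 := by
        simp only [← norm_mul, ← inner_map_of_apply_eq_smul b hT, b.sum_sq_norm_inner_right]

end Diagonalizable

section InverseBound

variable {n 𝕜 : Type*} [Fintype n] [DecidableEq n] [RCLike 𝕜] {A : Matrix n n 𝕜} {c : ℝ}

lemma mul_norm_le_norm_toLp_mulVec (hA : A.IsHermitian) (hc : 0 ≤ c)
    (hmin : ∀ k, c ≤ |hA.eigenvalues k|) (x : n → 𝕜) :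
    c * ‖WithLp.toLp 2 x‖ ≤ ‖WithLp.toLp 2 (A *ᵥ x)‖ := by
  have heig (k : n) : A.toEuclideanLin (hA.eigenvectorBasis k) =
      (hA.eigenvalues k : 𝕜) • hA.eigenvectorBasis k := by
    rw [toLpLin_apply, hA.mulVec_eigenvectorBasis, ← RCLike.real_smul_eq_coe_smul,
      WithLp.toLp_smul]
  exact mul_norm_le_norm_map_of_apply_eq_smul hA.eigenvectorBasis heig hc
    (by simpa only [RCLike.norm_ofReal] using hmin) (WithLp.toLp 2 x)

lemma isUnit_of_mul_norm_le_norm_toLp_mulVec (hc : 0 < c)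
    (hA : ∀ x : n → 𝕜, c * ‖WithLp.toLp 2 x‖ ≤ ‖WithLp.toLp 2 (A *ᵥ x)‖) : IsUnit A := by
  refine mulVec_injective_iff_isUnit.mp ((injective_iff_map_eq_zero A.mulVecLin).mpr fun x hx ↦ ?_)
  have hx_le : c * ‖WithLp.toLp 2 x‖ ≤ 0 := by
    simpa only [← mulVecLin_apply, hx, WithLp.toLp_zero, norm_zero] using hA x
  have hx_norm : ‖WithLp.toLp 2 x‖ ≤ 0 := nonpos_of_mul_nonpos_right hx_le hc
  simpa only [norm_le_zero_iff, WithLp.toLp_eq_zero] using hx_norm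

lemma norm_toLp_inv_mulVec_le (hA : A.IsHermitian) (hc : 0 < c)
    (hmin : ∀ k, c ≤ |hA.eigenvalues k|) (b : n → 𝕜) :
    ‖WithLp.toLp 2 (A⁻¹ *ᵥ b)‖ ≤ ‖WithLp.toLp 2 b‖ / c := by
  have hbelow := mul_norm_le_norm_toLp_mulVec hA hc.le hmin
  have hdet := (isUnit_iff_isUnit_det A).mp (isUnit_of_mul_norm_le_norm_toLp_mulVec hc hbelow)
  rw [le_div_iff₀' hc]
  simpa only [mulVec_mulVec, mul_nonsing_inv A hdet, one_mulVec] using hbelow (A⁻¹ *ᵥ b)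

end InverseBound

lemma norm_sum_div_smul_le {ι 𝕜 E : Type*} [NormedField 𝕜] [SeminormedAddCommGroup E]
    [NormedSpace 𝕜 E] (s : Finset ι) {a d : ι → 𝕜} {v : ι → E} {C M : ℝ} (hC : 0 < C)
    (hd : ∀ j ∈ s, C ≤ ‖d j‖) (hv : ∀ j ∈ s, ‖v j‖ ≤ M) :
    ‖∑ j ∈ s, (a j / d j) • v j‖ ≤ (∑ j ∈ s, ‖a j‖) / C * M := by
  rw [Finset.sum_div, Finset.sum_mul]
  refine norm_sum_le_of_le s fun j hj ↦ ?_
  rw [norm_smul, norm_div]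
  gcongr
  exacts [hd j hj, hv j hj]

lemma sum_div_smul_row_eq_mulVec {m n K : Type*} [Fintype m] [DecidableEq m] [Field K]
    (L : Matrix m n K) {d : m → K} (hd : ∀ j, d j ≠ 0) (a : m → K) :
    ∑ j, (a j / d j) • L j = (Lᵀ * (diagonal d)⁻¹) *ᵥ a := by
  have hdiag : (diagonal d)⁻¹ = diagonal d⁻¹ :=
    inv_eq_right_inv <| by
      simp only [diagonal_mul_diagonal, Pi.inv_apply, mul_inv_cancel₀ (hd _), diagonal_one]
  have hweights : diagonal d⁻¹ *ᵥ a = fun j ↦ a j / d j := by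
    ext j
    rw [mulVec_diagonal, Pi.inv_apply, inv_mul_eq_div]
  rw [hdiag, ← mulVec_mulVec, hweights, mulVec_transpose, vecMul_eq_sum]

lemma smul_inv_mulVec_smul {n K : Type*} [Fintype n] [DecidableEq n] [Field K]
    {A : Matrix n n K} (hA : IsUnit A) {a : K} (ha : a ≠ 0) (b : n → K) :
    (a • A)⁻¹ *ᵥ (a • b) = A⁻¹ *ᵥ b := by
  have hinv : (a • A)⁻¹ = a⁻¹ • A⁻¹ :=
    inv_smul' A (Units.mk0 a ha) ((isUnit_iff_isUnit_det A).mp hA)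
  rw [hinv, smul_mulVec, mulVec_smul, inv_smul_smul₀ ha]

lemma enorm_eq_norm_toLp {r : ℕ} (v : Fin r → ℝ) : _root_.enorm v = ‖WithLp.toLp 2 v‖ := by
  simp only [_root_.enorm, EuclideanSpace.norm_eq, Real.norm_eq_abs, sq_abs]

/-- Section 6.1, equation (35): the Gateaux derivative
`D_i = σ_i⁻²(N⁻¹Λ′Σ⁻¹Λ)⁻¹(N⁻¹∑_j λ_j Γ_{ji}/σ_j²)` satisfies
`‖D_i‖ ≤ M_Λ M_ξ/(c C² N)`, and `D_i = σ_i⁻²(Λ′Σ⁻¹Λ)⁻¹Λ′Σ⁻¹Γ e_i`. -/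
theorem stmt7 {N r : ℕ} (hN : 0 < N)
    (Λ : Matrix (Fin N) (Fin r) ℝ) (MΛ Mξ C c : ℝ)
    (hMΛ : ∀ j, _root_.enorm (Λ j) ≤ MΛ)
    (σ2 : Fin N → ℝ) (hC : 0 < C) (hσ : ∀ j, C ≤ σ2 j)
    (Γ : Matrix (Fin N) (Fin N) ℝ) (i : Fin N)
    (hΓ : ∑ j, |Γ j i| ≤ Mξ)
    (hc : 0 < c)
    (hH : (((N : ℝ)⁻¹) • (Λᵀ * (Matrix.diagonal σ2)⁻¹ * Λ)).IsHermitian)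
    (hmin : ∀ k, c ≤ hH.eigenvalues k)
    (hinv : IsUnit (Λᵀ * (Matrix.diagonal σ2)⁻¹ * Λ))
    (D : Fin r → ℝ)
    (hD : D = (σ2 i)⁻¹ •
      ((((N : ℝ)⁻¹) • (Λᵀ * (Matrix.diagonal σ2)⁻¹ * Λ))⁻¹ *ᵥ
        ((N : ℝ)⁻¹ • ∑ j, (Γ j i / σ2 j) • Λ j))) :
    _root_.enorm D ≤ MΛ * Mξ / (c * C ^ 2 * N) ∧
      D = (σ2 i)⁻¹ •
        (((Λᵀ * (Matrix.diagonal σ2)⁻¹ * Λ)⁻¹ * Λᵀ * (Matrix.diagonal σ2)⁻¹ * Γ) *ᵥ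
          Pi.single i 1) := by
  have hσ_pos (j : Fin N) : 0 < σ2 j := hC.trans_le (hσ j)
  constructor
  · have hMΛ_nonneg : 0 ≤ MΛ := (Real.sqrt_nonneg _).trans (hMΛ i)
    simp only [enorm_eq_norm_toLp] at hMΛ
    have hscore : ‖WithLp.toLp 2 (∑ j, (Γ j i / σ2 j) • Λ j)‖ ≤ Mξ / C * MΛ := by
      simp only [WithLp.toLp_sum, WithLp.toLp_smul]
      exact (norm_sum_div_smul_le Finset.univ hC (fun j _ ↦ (hσ j).trans (le_abs_self _))
        fun j _ ↦ hMΛ j).trans (by gcongr; exact hΓ)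
    have hsolve := (norm_toLp_inv_mulVec_le hH hc (fun k ↦ (hmin k).trans (le_abs_self _)) _).trans
      (div_le_div_of_nonneg_right hscore hc.le)
    have hscale : ‖(σ2 i)⁻¹ * (N : ℝ)⁻¹‖ ≤ C⁻¹ * (N : ℝ)⁻¹ := by
      rw [norm_mul, norm_inv, norm_inv, Real.norm_natCast, Real.norm_of_nonneg (hσ_pos i).le]
      exact mul_le_mul_of_nonneg_right (inv_anti₀ hC (hσ i)) (by positivity)
    rw [enorm_eq_norm_toLp, hD, mulVec_smul, smul_smul, WithLp.toLp_smul, norm_smul]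
    calc _ ≤ C⁻¹ * (N : ℝ)⁻¹ * (Mξ / C * MΛ / c) := by gcongr
      _ = MΛ * Mξ / (c * C ^ 2 * N) := by field_simp
  · have hcol : (fun j ↦ Γ j i) = Γ *ᵥ Pi.single i 1 := (mulVec_single_one Γ i).symm
    rw [hD, smul_inv_mulVec_smul hinv (by positivity),
      sum_div_smul_row_eq_mulVec Λ fun j ↦ (hσ_pos j).ne', hcol]
    simp only [mulVec_mulVec, Matrix.mul_assoc]
end
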